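/- Let G be a connected undirected graph on n vertices (with self-loops at every vertex), let ρ > 0, and for each k ≥ 1 let B_k be an n×n doubly stochastic matrix such that B_k[i,j] ≥ ρ whenever j is a neighbor of i (including j = i) and B_k[i,j] = 0 otherwise. Define the transition matrices Φ(k,s) = B_k B_{k−1} ⋯ B_s for k ≥ s ≥ 1. Then (i) lim_{k→∞} Φ(k,s) = (1/n) 𝟙𝟙ᵀ for all s ≥ 1, and (ii) |Φ(k,s)[i,j] − 1/n| ≤ θ β^{k−s+1} for all k ≥ s ≥ 1 and all i, j, where θ = (1 − ρ/(4n²))^{−2} and β = 1 − ρ/(4n²). -/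

import Mathlib

/-!
Multiplying a vector by a doubly stochastic matrix preserves its mean and lowers its sum of squared
deviations from the mean by exactly the total of its variances with respect to the rows of the
matrix. Row `i` gives weight at least `ρ` to `i` and to each neighbor `j`, so the variance at `i`
controls `(w i - w j) ^ 2`. A path from `u` to `v` meets every vertex at most once, so summing along
it and applying Cauchy-Schwarz bounds `(w u - w v) ^ 2` by the total variance. Hence each
multiplication contracts the squared deviation by the factor `1 - ρ / n ^ 2`, which is at most
`(1 - ρ / (4 * n ^ 2)) ^ 2`. The columns of `Φ k s` arise in this way from the standard basis
vectors, whose squared deviation is at most `1`.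
-/

section WeightedTransition

open Finset Matrix Filter
open scoped BigOperators Topology

variable {V : Type*}

theorem tendsto_of_abs_apply_sub_le {ι m n : Type*} {l : Filter ι} {A : ι → Matrix m n ℝ}
    {L : Matrix m n ℝ} {u : ι → ℝ} (hu : Tendsto u l (𝓝 0))
    (hA : ∀ᶠ k in l, ∀ i j, |A k i j - L i j| ≤ u k) : Tendsto A l (𝓝 L) :=
  tendsto_pi_nhds.2 fun i => tendsto_pi_nhds.2 fun j => tendsto_iff_dist_tendsto_zero.2 <|
    squeeze_zero' (.of_forall fun _ => dist_nonneg) (hA.mono fun _ h => h i j) hu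

theorem tendsto_pow_sub_add_one {β : ℝ} (hβ0 : 0 ≤ β) (hβ1 : β < 1) (s : ℕ) :
    Tendsto (fun k => β ^ (k - s + 1)) atTop (𝓝 0) :=
  (tendsto_pow_atTop_nhds_zero_of_lt_one hβ0 hβ1).comp
    ((tendsto_add_atTop_nat 1).comp (tendsto_sub_atTop_nat s))

theorem dist_le_sum_map_support {α : Type*} [PseudoMetricSpace α] {G : SimpleGraph V} {f : V → α}
    {g : V → ℝ} (hg : ∀ v, 0 ≤ g v) (hfg : ∀ u v, G.Adj u v → dist (f u) (f v) ≤ g u) {u v : V}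
    (p : G.Walk u v) : dist (f u) (f v) ≤ (p.support.map g).sum := by
  induction p with
  | nil => simpa using hg _
  | @cons a b c hab p ih =>
    rw [SimpleGraph.Walk.support_cons, List.map_cons, List.sum_cons]
    exact (dist_triangle _ (f b) _).trans (add_le_add (hfg a b hab) ih)

variable [Fintype V]

theorem dist_le_sum_of_preconnected {α : Type*} [PseudoMetricSpace α] {G : SimpleGraph V}
    (hG : G.Preconnected) {f : V → α} {g : V → ℝ} (hg : ∀ v, 0 ≤ g v)
    (hfg : ∀ u v, G.Adj u v → dist (f u) (f v) ≤ g u) (u v : V) :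
    dist (f u) (f v) ≤ ∑ i, g i := by
  classical
  obtain ⟨p, hp⟩ := hG.exists_isPath u v
  calc dist (f u) (f v) ≤ (p.support.map g).sum := dist_le_sum_map_support hg hfg p
    _ = ∑ i ∈ p.support.toFinset, g i := (List.sum_toFinset g hp.support_nodup).symm
    _ ≤ ∑ i, g i := sum_le_univ_sum_of_nonneg hg

/-- The sum of squared deviations of `w` from its mean, the Lyapunov function of the averaging
iteration. -/
noncomputable def sqDeviation (w : V → ℝ) : ℝ := ∑ i, (w i - 𝔼 j, w j) ^ 2

theorem sqDeviation_nonneg (w : V → ℝ) : 0 ≤ sqDeviation w :=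
  sum_nonneg fun _ _ => sq_nonneg _

theorem sqDeviation_eq_sum_sq_sub (w : V → ℝ) :
    sqDeviation w = ∑ i, w i ^ 2 - Fintype.card V * (𝔼 i, w i) ^ 2 := by
  simp only [sqDeviation, sub_sq, sum_add_distrib, sum_sub_distrib, ← mul_sum, ← sum_mul,
    sum_const, card_univ, nsmul_eq_mul]
  rw [← Fintype.card_mul_expect w]
  ring

theorem sum_sum_sub_sq_eq_mul_sqDeviation (w : V → ℝ) :
    ∑ u, ∑ v, (w u - w v) ^ 2 = 2 * Fintype.card V * sqDeviation w := by
  simp only [sqDeviation_eq_sum_sq_sub, sub_sq, sum_add_distrib, sum_sub_distrib, ← mul_sum,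
    ← sum_mul, sum_const, card_univ, nsmul_eq_mul]
  rw [← Fintype.card_mul_expect w]
  ring

theorem sqDeviation_le_sum_sq (w : V → ℝ) : sqDeviation w ≤ ∑ i, w i ^ 2 := by
  rw [sqDeviation_eq_sum_sq_sub]
  exact sub_le_self _ (by positivity)

theorem abs_sub_expect_le_sqrt_sqDeviation (w : V → ℝ) (i : V) :
    |w i - 𝔼 j, w j| ≤ √(sqDeviation w) :=
  Real.abs_le_sqrt <|
    single_le_sum (f := fun i => (w i - 𝔼 j, w j) ^ 2) (fun _ _ => sq_nonneg _) (mem_univ i)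

theorem sqDeviation_single_one_le_one [DecidableEq V] (j : V) :
    sqDeviation (Pi.single j 1 : V → ℝ) ≤ 1 :=
  (sqDeviation_le_sum_sq _).trans_eq (by simp [Pi.single_apply])

/-- The variance of `w` with respect to the weights in row `i` of `B`. The mean is `(B *ᵥ w) i`,
which presupposes that the row sums to `1`. -/
noncomputable def rowVariance {U : Type*} (B : Matrix U V ℝ) (w : V → ℝ) (i : U) : ℝ :=
  ∑ j, B i j * (w j - (B *ᵥ w) i) ^ 2

theorem rowVariance_nonneg {U : Type*} {B : Matrix U V ℝ} {i : U} (hB : ∀ j, 0 ≤ B i j)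
    (w : V → ℝ) : 0 ≤ rowVariance B w i :=
  sum_nonneg fun j _ => mul_nonneg (hB j) (sq_nonneg _)

theorem rowVariance_eq_sum_mul_sq_sub {U : Type*} {B : Matrix U V ℝ} {i : U}
    (hB : ∑ j, B i j = 1) (w : V → ℝ) :
    rowVariance B w i = ∑ j, B i j * w j ^ 2 - (B *ᵥ w) i ^ 2 := by
  have hmean : ∑ j, B i j * w j = (B *ᵥ w) i := rfl
  calc rowVariance B w i
      = ∑ j, B i j * w j ^ 2 - 2 * (B *ᵥ w) i * ∑ j, B i j * w j
          + (B *ᵥ w) i ^ 2 * ∑ j, B i j := by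
        simp only [rowVariance, mul_sum, ← sum_sub_distrib, ← sum_add_distrib]
        exact sum_congr rfl fun j _ => by ring
    _ = ∑ j, B i j * w j ^ 2 - (B *ᵥ w) i ^ 2 := by rw [hmean, hB]; ring

theorem mul_sub_sq_le_two_mul_rowVariance {B : Matrix V V ℝ} {i j : V} {ρ : ℝ}
    (hB : ∀ l, 0 ≤ B i l) (hij : i ≠ j) (hi : ρ ≤ B i i) (hj : ρ ≤ B i j) (hρ : 0 ≤ ρ)
    (w : V → ℝ) : ρ * (w i - w j) ^ 2 ≤ 2 * rowVariance B w i := by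
  classical
  set y := (B *ᵥ w) i
  have two_terms_le :
      B i i * (w i - y) ^ 2 + B i j * (w j - y) ^ 2 ≤ rowVariance B w i := by
    rw [← sum_pair (f := fun l => B i l * (w l - y) ^ 2) hij]
    exact sum_le_univ_sum_of_nonneg fun l => mul_nonneg (hB l) (sq_nonneg _)
  calc ρ * (w i - w j) ^ 2
      = ρ * ((w i - y) + -(w j - y)) ^ 2 := by ring
    _ ≤ ρ * (2 * ((w i - y) ^ 2 + (-(w j - y)) ^ 2)) := by gcongr; exact add_sq_le
    _ = 2 * (ρ * (w i - y) ^ 2 + ρ * (w j - y) ^ 2) := by ring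
    _ ≤ 2 * (B i i * (w i - y) ^ 2 + B i j * (w j - y) ^ 2) := by gcongr
    _ ≤ 2 * rowVariance B w i := by gcongr

theorem mul_sub_sq_le_card_mul_sum_rowVariance {G : SimpleGraph V} (hG : G.Preconnected)
    {B : Matrix V V ℝ} {ρ : ℝ} (hρ : 0 < ρ) (hBnn : ∀ i j, 0 ≤ B i j)
    (hBρ : ∀ i j, G.Adj i j ∨ i = j → ρ ≤ B i j) (w : V → ℝ) (u v : V) :
    ρ * (w u - w v) ^ 2 ≤ 2 * Fintype.card V * ∑ i, rowVariance B w i := by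
  have hvar (i : V) : 0 ≤ 2 * rowVariance B w i / ρ := by
    have := rowVariance_nonneg (hBnn i) w
    positivity
  have edge_le (i j : V) (hij : G.Adj i j) : dist (w i) (w j) ≤ √(2 * rowVariance B w i / ρ) := by
    refine Real.abs_le_sqrt ((le_div_iff₀' hρ).2 ?_)
    exact mul_sub_sq_le_two_mul_rowVariance (hBnn i) hij.ne (hBρ i i (.inr rfl))
      (hBρ i j (.inl hij)) hρ.le w
  have pair_le : |w u - w v| ≤ ∑ i, √(2 * rowVariance B w i / ρ) :=
    dist_le_sum_of_preconnected hG (fun _ => Real.sqrt_nonneg _) edge_le u v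
  calc ρ * (w u - w v) ^ 2
      = ρ * |w u - w v| ^ 2 := by rw [sq_abs]
    _ ≤ ρ * (∑ i, √(2 * rowVariance B w i / ρ)) ^ 2 := by gcongr
    _ ≤ ρ * (Fintype.card V * ∑ i, √(2 * rowVariance B w i / ρ) ^ 2) := by
        gcongr; exact sq_sum_le_card_mul_sum_sq
    _ = 2 * Fintype.card V * ∑ i, rowVariance B w i := by
        simp only [Real.sq_sqrt (hvar _), ← sum_div, ← mul_sum]
        field_simp

theorem mul_sqDeviation_le_sum_rowVariance {G : SimpleGraph V} (hG : G.Connected)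
    {B : Matrix V V ℝ} {ρ : ℝ} (hρ : 0 < ρ) (hBnn : ∀ i j, 0 ≤ B i j)
    (hBρ : ∀ i j, G.Adj i j ∨ i = j → ρ ≤ B i j) (w : V → ℝ) :
    ρ / (Fintype.card V : ℝ) ^ 2 * sqDeviation w ≤ ∑ i, rowVariance B w i := by
  have : Nonempty V := hG.nonempty
  have : (0 : ℝ) < Fintype.card V := by exact_mod_cast Fintype.card_pos
  have sum_pairs_le : ρ * (2 * Fintype.card V * sqDeviation w) ≤
      Fintype.card V * (Fintype.card V * (2 * Fintype.card V * ∑ i, rowVariance B w i)) := by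
    calc ρ * (2 * Fintype.card V * sqDeviation w)
        = ∑ u, ∑ v, ρ * (w u - w v) ^ 2 := by
          simp only [← sum_sum_sub_sq_eq_mul_sqDeviation, mul_sum]
      _ ≤ ∑ _u : V, ∑ _v : V, 2 * Fintype.card V * ∑ i, rowVariance B w i :=
          sum_le_sum fun u _ => sum_le_sum fun v _ =>
            mul_sub_sq_le_card_mul_sum_rowVariance hG.preconnected hρ hBnn hBρ w u v
      _ = _ := by simp only [sum_const, card_univ, nsmul_eq_mul]
  rw [div_mul_eq_mul_div, div_le_iff₀ (by positivity)]
  refine le_of_mul_le_mul_left ?_ (show (0 : ℝ) < 2 * Fintype.card V by positivity)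
  linarith

theorem expect_col_eq_one_div_card {U : Type*} {A : Matrix V U ℝ} {j : U}
    (hA : ∑ i, A i j = 1) : 𝔼 i, A.col j i = 1 / Fintype.card V :=
  (Fintype.expect_eq_sum_div_card _).trans (congrArg (· / _) hA)

theorem one_sub_div_four_mul_card_sq_mem_Ioo [Nonempty V] {ρ : ℝ} (hρ : 0 < ρ) (hρ1 : ρ ≤ 1) :
    1 - ρ / (4 * (Fintype.card V : ℝ) ^ 2) ∈ Set.Ioo 0 1 := by
  have hcard : (1 : ℝ) ≤ Fintype.card V := by exact_mod_cast Fintype.card_pos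
  have hdiv_lt : ρ / (4 * (Fintype.card V : ℝ) ^ 2) < 1 := by
    rw [div_lt_one (by positivity)]
    nlinarith
  exact ⟨sub_pos.2 hdiv_lt, sub_lt_self 1 (by positivity)⟩

theorem sqDeviation_col_le_pow_of_succ_eq_mul {B P : ℕ → Matrix V V ℝ} {s : ℕ} {r : ℝ} (hr : 0 ≤ r)
    (hB : ∀ k, s ≤ k → ∀ w, sqDeviation (B k *ᵥ w) ≤ r * sqDeviation w)
    (hPs : P s = B s) (hP : ∀ k, s ≤ k → P (k + 1) = B (k + 1) * P k) {k : ℕ} (hk : s ≤ k)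
    (j : V) : sqDeviation ((P k).col j) ≤ r ^ (k - s + 1) := by
  classical
  induction k, hk using Nat.le_induction with
  | base =>
    calc sqDeviation ((P s).col j) = sqDeviation (B s *ᵥ Pi.single j 1) := by
          rw [hPs, mulVec_single_one]
      _ ≤ r * sqDeviation (Pi.single j 1) := hB s le_rfl _
      _ ≤ r * 1 := by gcongr; exact sqDeviation_single_one_le_one j
      _ = r ^ (s - s + 1) := by simp
  | succ k hk ih =>
    calc sqDeviation ((P (k + 1)).col j) = sqDeviation (B (k + 1) *ᵥ (P k).col j) := by
          rw [hP k hk]; rfl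
      _ ≤ r * sqDeviation ((P k).col j) := hB (k + 1) (by lia) _
      _ ≤ r * r ^ (k - s + 1) := by gcongr
      _ = r ^ (k + 1 - s + 1) := by rw [← pow_succ', Nat.sub_add_comm hk]

variable [DecidableEq V]

theorem expect_mulVec_of_mem_doublyStochastic {B : Matrix V V ℝ} (hB : B ∈ doublyStochastic ℝ V)
    (w : V → ℝ) : 𝔼 i, (B *ᵥ w) i = 𝔼 i, w i := by
  rw [Fintype.expect_eq_sum_div_card, Fintype.expect_eq_sum_div_card,
    sum_mulVec_of_mem_doublyStochastic hB]

theorem sum_rowVariance {B : Matrix V V ℝ} (hB : B ∈ doublyStochastic ℝ V) (w : V → ℝ) :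
    ∑ i, rowVariance B w i = sqDeviation w - sqDeviation (B *ᵥ w) := by
  have sum_weighted_sq : ∑ i, ∑ j, B i j * w j ^ 2 = ∑ j, w j ^ 2 := by
    rw [sum_comm]
    simp only [← sum_mul, sum_col_of_mem_doublyStochastic hB, one_mul]
  simp only [rowVariance_eq_sum_mul_sq_sub (sum_row_of_mem_doublyStochastic hB _), sum_sub_distrib,
    sum_weighted_sq, sqDeviation_eq_sum_sq_sub, expect_mulVec_of_mem_doublyStochastic hB]
  ring

theorem sqDeviation_mulVec_le {G : SimpleGraph V} (hG : G.Connected) {B : Matrix V V ℝ} {ρ : ℝ}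
    (hρ : 0 < ρ) (hB : B ∈ doublyStochastic ℝ V)
    (hBρ : ∀ i j, G.Adj i j ∨ i = j → ρ ≤ B i j) (w : V → ℝ) :
    sqDeviation (B *ᵥ w) ≤ (1 - ρ / (Fintype.card V : ℝ) ^ 2) * sqDeviation w := by
  have loss := mul_sqDeviation_le_sum_rowVariance hG hρ (mem_doublyStochastic.1 hB).1 hBρ w
  rw [sum_rowVariance hB] at loss
  linarith

theorem sqDeviation_mulVec_le_sq_mul {G : SimpleGraph V} (hG : G.Connected) {B : Matrix V V ℝ}
    {ρ : ℝ} (hρ : 0 < ρ) (hB : B ∈ doublyStochastic ℝ V)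
    (hBρ : ∀ i j, G.Adj i j ∨ i = j → ρ ≤ B i j) (w : V → ℝ) :
    sqDeviation (B *ᵥ w) ≤ (1 - ρ / (4 * (Fintype.card V : ℝ) ^ 2)) ^ 2 * sqDeviation w := by
  set x := ρ / (Fintype.card V : ℝ) ^ 2 with hx
  have hx0 : 0 ≤ x := by positivity
  have hx4 : ρ / (4 * (Fintype.card V : ℝ) ^ 2) = x / 4 := by rw [hx]; ring
  rw [hx4]
  calc sqDeviation (B *ᵥ w) ≤ (1 - x) * sqDeviation w := sqDeviation_mulVec_le hG hρ hB hBρ w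
    _ ≤ (1 - x / 4) ^ 2 * sqDeviation w := by
        gcongr
        · exact sqDeviation_nonneg w
        · nlinarith [sq_nonneg x]

section Product

variable {B P : ℕ → Matrix V V ℝ} {s : ℕ}

theorem mem_doublyStochastic_of_succ_eq_mul (hB : ∀ k, s ≤ k → B k ∈ doublyStochastic ℝ V)
    (hPs : P s = B s) (hP : ∀ k, s ≤ k → P (k + 1) = B (k + 1) * P k) {k : ℕ} (hk : s ≤ k) :
    P k ∈ doublyStochastic ℝ V := by
  induction k, hk using Nat.le_induction with
  | base => exact hPs ▸ hB s le_rfl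
  | succ k hk ih => exact hP k hk ▸ mul_mem (hB (k + 1) (by lia)) ih

theorem abs_sub_one_div_card_le_pow_of_succ_eq_mul {β : ℝ} (hβ : 0 ≤ β)
    (hBds : ∀ k, s ≤ k → B k ∈ doublyStochastic ℝ V)
    (hB : ∀ k, s ≤ k → ∀ w, sqDeviation (B k *ᵥ w) ≤ β ^ 2 * sqDeviation w)
    (hPs : P s = B s) (hP : ∀ k, s ≤ k → P (k + 1) = B (k + 1) * P k) {k : ℕ} (hk : s ≤ k)
    (i j : V) : |P k i j - 1 / Fintype.card V| ≤ β ^ (k - s + 1) := by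
  have hPk : P k ∈ doublyStochastic ℝ V := mem_doublyStochastic_of_succ_eq_mul hBds hPs hP hk
  rw [← expect_col_eq_one_div_card (sum_col_of_mem_doublyStochastic hPk j)]
  calc |P k i j - 𝔼 l, (P k).col j l| ≤ √(sqDeviation ((P k).col j)) :=
        abs_sub_expect_le_sqrt_sqDeviation ((P k).col j) i
    _ ≤ √((β ^ 2) ^ (k - s + 1)) :=
        Real.sqrt_le_sqrt (sqDeviation_col_le_pow_of_succ_eq_mul (sq_nonneg β) hB hPs hP hk j)
    _ = β ^ (k - s + 1) := by rw [pow_right_comm, Real.sqrt_sq (pow_nonneg hβ _)]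

end Product

theorem stmt_7_general (G : ℕ → SimpleGraph V) (hG : ∀ k, 1 ≤ k → (G k).Connected)
    (ρ : ℝ) (hρ : 0 < ρ) (B : ℕ → Matrix V V ℝ)
    (hBρ : ∀ k i j, 1 ≤ k → (G k).Adj i j ∨ i = j → ρ ≤ B k i j)
    (hB : ∀ k, 1 ≤ k → B k ∈ doublyStochastic ℝ V)
    (Φ : ℕ → ℕ → Matrix V V ℝ) (hΦdiag : ∀ s, 1 ≤ s → Φ s s = B s)
    (hΦrec : ∀ k s, 1 ≤ s → s ≤ k → Φ (k + 1) s = B (k + 1) * Φ k s) :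
    (∀ s, 1 ≤ s → Tendsto (fun k => Φ k s) atTop
      (𝓝 (Matrix.of fun _ _ => (1 : ℝ) / Fintype.card V))) ∧
    (∀ k s i j, 1 ≤ s → s ≤ k →
      |Φ k s i j - 1 / Fintype.card V| ≤
        (1 - ρ / (4 * (Fintype.card V : ℝ) ^ 2))⁻¹ ^ 2 *
          (1 - ρ / (4 * (Fintype.card V : ℝ) ^ 2)) ^ (k - s + 1)) := by
  obtain ⟨i₀⟩ : Nonempty V := (hG 1 le_rfl).nonempty
  have : Nonempty V := ⟨i₀⟩
  have hρ1 : ρ ≤ 1 :=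
    (hBρ 1 i₀ i₀ le_rfl (.inr rfl)).trans (le_one_of_mem_doublyStochastic (hB 1 le_rfl))
  have hβ := one_sub_div_four_mul_card_sq_mem_Ioo (V := V) hρ hρ1
  set β := 1 - ρ / (4 * (Fintype.card V : ℝ) ^ 2)
  have contraction (k : ℕ) (hk : 1 ≤ k) (w : V → ℝ) :
      sqDeviation (B k *ᵥ w) ≤ β ^ 2 * sqDeviation w :=
    sqDeviation_mulVec_le_sq_mul (hG k hk) hρ (hB k hk) (fun i j => hBρ k i j hk) w
  have decay (k s : ℕ) (i j : V) (hs : 1 ≤ s) (hk : s ≤ k) :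
      |Φ k s i j - 1 / Fintype.card V| ≤ β ^ (k - s + 1) :=
    abs_sub_one_div_card_le_pow_of_succ_eq_mul hβ.1.le (fun k hk => hB k (hs.trans hk))
      (fun k hk => contraction k (hs.trans hk)) (P := (Φ · s)) (hΦdiag s hs)
      (fun k => hΦrec k s hs) hk i j
  refine ⟨fun s hs => tendsto_of_abs_apply_sub_le (tendsto_pow_sub_add_one hβ.1.le hβ.2 s) ?_,
    fun k s i j hs hk => (decay k s i j hs hk).trans ?_⟩
  · filter_upwards [eventually_ge_atTop s] with k hk i j using decay k s i j hs hk
  · exact le_mul_of_one_le_left (pow_nonneg hβ.1.le _)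
      (one_le_pow₀ ((one_le_inv₀ hβ.1).2 hβ.2.le))

end WeightedTransition

/-- Linear convergence of products of doubly stochastic matrices conforming to a
connected graph (with self-loops) to the averaging matrix. -/
theorem stmt_7 (n : ℕ) (hn : 1 ≤ n)
    (G : SimpleGraph (Fin n)) (hG : G.Connected)
    (ρ : ℝ) (hρ : 0 < ρ)
    (B : ℕ → Matrix (Fin n) (Fin n) ℝ)
    (hBpos : ∀ k i j, 1 ≤ k → (G.Adj i j ∨ i = j) → ρ ≤ B k i j)
    (hBzero : ∀ k i j, 1 ≤ k → ¬(G.Adj i j ∨ i = j) → B k i j = 0)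
    (hBnn : ∀ k i j, 1 ≤ k → 0 ≤ B k i j)
    (hBrow : ∀ k i, 1 ≤ k → ∑ j, B k i j = 1)
    (hBcol : ∀ k j, 1 ≤ k → ∑ i, B k i j = 1)
    (Φ : ℕ → ℕ → Matrix (Fin n) (Fin n) ℝ)
    (hΦdiag : ∀ s, 1 ≤ s → Φ s s = B s)
    (hΦrec : ∀ k s, 1 ≤ s → s ≤ k → Φ (k + 1) s = B (k + 1) * Φ k s) :
    (∀ s, 1 ≤ s → Filter.Tendsto (fun k => Φ k s) Filter.atTop
      (nhds (Matrix.of fun _ _ => (1 : ℝ) / n))) ∧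
    (∀ k s i j, 1 ≤ s → s ≤ k →
      |Φ k s i j - 1 / n| ≤
        (1 - ρ / (4 * (n : ℝ) ^ 2))⁻¹ ^ 2 * (1 - ρ / (4 * (n : ℝ) ^ 2)) ^ (k - s + 1)) := by
  simpa only [Fintype.card_fin] using stmt_7_general (fun _ => G) (fun _ _ => hG) ρ hρ B hBpos
    (fun k hk => mem_doublyStochastic_iff_sum.2 ⟨(hBnn k · · hk), (hBrow k · hk), (hBcol k · hk)⟩)
    Φ hΦdiag hΦrec
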